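/- arXiv:1307.4229 — 2 statements merged into one kernel-verified Lean document; each statement's English description precedes it below -/
import Mathlib

section
/- Let k ≥ 3, s ≥ 1 be integers and fix integers m₁, m₂, m₃ with 3 ≤ mⱼ ≤ k for j = 1,2,3. Then the sum of 2^{−|E(S₁) ∪ E(S₂) ∪ E(S₃) ∪ E(S₄)|} over all ordered 4-tuples (S₁, S₂, S₃, S₄) of transversals of Fin k × Fin s satisfying |S₁ ∩ S₂ ∩ S₃ ∩ S₄| ≥ 3, |S₁ ∩ S₂| = m₁, |(S₁ ∪ S₂) ∩ S₃| = m₂ and |(S₁ ∪ S₂ ∪ S₃) ∩ S₄| = m₃ is at most C(k,3) · s^{4k−9} · 2^{−4·C(k,2) + 9} · ∏_{j=1}^{3} ( C(jk, mⱼ − 3) · s^{−(mⱼ−3)} · 2^{C(mⱼ,2) − 3} ). -/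
/-- A transversal of `Fin k × Fin s`: a finite set containing exactly one
vertex from each class `V_i = {i} × Fin s`. -/
def IsTransversal {k s : ℕ} (S : Finset (Fin k × Fin s)) : Prop :=
  ∀ i : Fin k, (S.filter (fun v => v.1 = i)).card = 1

/-- The edge set of a transversal: all 2-element subsets of `S`. -/
def edgeSet {k s : ℕ} (S : Finset (Fin k × Fin s)) : Finset (Finset (Fin k × Fin s)) :=
  S.powersetCard 2

open Classical in
/-- Transversals containing `T` which meet `U` in exactly `m` vertices. -/
noncomputable def potF {k s : ℕ} (U T : Finset (Fin k × Fin s)) (m : ℕ) :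
    Finset (Finset (Fin k × Fin s)) :=
  Finset.univ.filter (fun S => IsTransversal S ∧ T ⊆ S ∧ (U ∩ S).card = m)

lemma IsTransversal.exists_mem {k s : ℕ} {S : Finset (Fin k × Fin s)} (h : IsTransversal S)
    (i : Fin k) : ∃ x : Fin s, (i, x) ∈ S := by
  obtain ⟨v, hv⟩ := Finset.card_eq_one.1 (h i)
  have : v ∈ S.filter (fun v => v.1 = i) := by rw [hv]; simp
  rw [Finset.mem_filter] at this
  obtain ⟨h1, rfl⟩ := this
  exact ⟨v.2, h1⟩

lemma IsTransversal.inj {k s : ℕ} {S : Finset (Fin k × Fin s)} (h : IsTransversal S)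
    {u v : Fin k × Fin s} (hu : u ∈ S) (hv : v ∈ S) (e : u.1 = v.1) : u = v := by
  have := Finset.card_le_one.1 (h v.1).le
  exact this u (by simp [hu, e]) v (by simp [hv])

lemma IsTransversal.card_eq {k s : ℕ} {S : Finset (Fin k × Fin s)} (h : IsTransversal S) :
    S.card = k := by
  have := Finset.card_eq_sum_card_fiberwise (s := S) (t := Finset.univ) (f := Prod.fst)
    (by intro x _; simp)
  rw [this, Finset.sum_congr rfl (fun i _ => h i)]
  simp

open Classical in
lemma card_transversal_superset {k s : ℕ} (W : Finset (Fin k × Fin s)) :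
    (Finset.univ.filter (fun S : Finset (Fin k × Fin s) => IsTransversal S ∧ W ⊆ S)).card
      ≤ s ^ (k - W.card) := by
  by_cases hne : ∃ S : Finset (Fin k × Fin s), IsTransversal S ∧ W ⊆ S
  swap
  · rw [Finset.filter_false_of_mem]
    · simp
    · intro S _ hS
      exact hne ⟨S, hS⟩
  obtain ⟨S₀, h₀, hW₀⟩ := hne
  have hWc : (W.image Prod.fst).card = W.card :=
    Finset.card_image_of_injOn (fun u hu v hv e => h₀.inj (hW₀ hu) (hW₀ hv) e)
  have hcard : Fintype.card ({i : Fin k // i ∉ W.image Prod.fst} → Fin s)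
      = s ^ (k - W.card) := by
    rw [Fintype.card_fun, Fintype.card_fin, Fintype.card_subtype_compl]
    congr 1
    rw [Fintype.card_fin, ← hWc]
    simp only [Fintype.card_coe]
  rw [← hcard, ← Finset.card_univ]
  obtain hx₀ | hemp : Nonempty (Fin s) ∨ IsEmpty (Fin s) := (isEmpty_or_nonempty _).symm
  swap
  · refine Finset.card_le_card_of_injOn (fun S i => (h₀.exists_mem i.1).choose)
      (by intro _ _; simp) ?_
    intro S _ S' _ _
    ext v
    exact (hemp.false v.2).elim
  obtain ⟨x₀⟩ := hx₀
  refine Finset.card_le_card_of_injOn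
    (fun S i => if h : ∃ x, (i.1, x) ∈ S then h.choose else x₀) (by intro _ _; simp) ?_
  have key : ∀ S S' : Finset (Fin k × Fin s), IsTransversal S → W ⊆ S → IsTransversal S' →
      W ⊆ S' → (fun i : {i : Fin k // i ∉ W.image Prod.fst} =>
        if h : ∃ x, (i.1, x) ∈ S then h.choose else x₀) =
      (fun i : {i : Fin k // i ∉ W.image Prod.fst} =>
        if h : ∃ x, (i.1, x) ∈ S' then h.choose else x₀) → S ⊆ S' := by
    intro S S' hS hWS hS' hWS' e v hv
    by_cases hvi : v.1 ∈ W.image Prod.fst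
    · obtain ⟨w, hw, hwv⟩ := Finset.mem_image.1 hvi
      rw [← hS.inj (hWS hw) hv hwv]
      exact hWS' hw
    · have e1 := congrFun e ⟨v.1, hvi⟩
      simp only [hS.exists_mem v.1, hS'.exists_mem v.1, dif_pos] at e1
      have a1 := (hS.exists_mem v.1).choose_spec
      have a2 := (hS'.exists_mem v.1).choose_spec
      rw [← e1] at a2
      rw [← hS.inj a1 hv rfl]
      exact a2
  intro S hS S' hS' e
  simp only [Finset.coe_filter, Finset.mem_univ, true_and, Set.mem_ofPred_eq] at hS hS'
  exact (key S S' hS.1 hS.2 hS'.1 hS'.2 e).antisymm (key S' S hS'.1 hS'.2 hS.1 hS.2 e.symm)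

open Classical in
lemma card_potF {k s : ℕ} (U T : Finset (Fin k × Fin s)) (m N : ℕ) (hT : T.card = 3)
    (hTU : T ⊆ U) (hU : U.card ≤ N) (hm : 3 ≤ m) :
    (potF U T m).card ≤ N.choose (m - 3) * s ^ (k - m) := by
  have hsub : potF U T m ⊆ ((U \ T).powersetCard (m - 3)).biUnion (fun W =>
      Finset.univ.filter (fun S : Finset (Fin k × Fin s) => IsTransversal S ∧ W ∪ T ⊆ S)) := by
    intro S hS
    simp only [potF, Finset.mem_filter, Finset.mem_univ, true_and] at hS
    obtain ⟨h1, h2, h3⟩ := hS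
    simp only [Finset.mem_biUnion, Finset.mem_filter, Finset.mem_univ, true_and,
      Finset.mem_powersetCard]
    refine ⟨(U ∩ S) \ T, ⟨Finset.sdiff_subset_sdiff Finset.inter_subset_left subset_rfl, ?_⟩,
      h1, Finset.union_subset (Finset.sdiff_subset.trans Finset.inter_subset_right) h2⟩
    rw [Finset.card_sdiff_of_subset (Finset.subset_inter hTU h2), h3, hT]
  refine (Finset.card_le_card hsub).trans ((Finset.card_biUnion_le_card_mul _ _
    (s ^ (k - m)) ?_).trans ?_)
  · intro W hW
    rw [Finset.mem_powersetCard] at hW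
    have hc : (W ∪ T).card = m := by
      rw [Finset.card_union_of_disjoint, hW.2, hT]
      · omega
      · exact Finset.disjoint_of_subset_left hW.1 Finset.sdiff_disjoint
    have := card_transversal_superset (W ∪ T)
    rwa [hc] at this
  · rw [Finset.card_powersetCard]
    exact Nat.mul_le_mul_right _ (Nat.choose_le_choose _
      ((Finset.card_le_card Finset.sdiff_subset).trans hU))

lemma edge_step {k s : ℕ} (X : Finset (Finset (Fin k × Fin s))) (U S : Finset (Fin k × Fin s))
    (m : ℕ) (hX : ∀ e ∈ X, e ⊆ U) (hS : IsTransversal S) (hm : (U ∩ S).card = m) :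
    X.card + k.choose 2 ≤ (X ∪ edgeSet S).card + m.choose 2 := by
  have h1 := Finset.card_union_add_card_inter X (edgeSet S)
  have h2 : (edgeSet S).card = k.choose 2 := by
    rw [edgeSet, Finset.card_powersetCard, hS.card_eq]
  have h3 : X ∩ edgeSet S ⊆ (U ∩ S).powersetCard 2 := by
    intro e he
    rw [Finset.mem_inter, edgeSet, Finset.mem_powersetCard] at he
    rw [Finset.mem_powersetCard]
    exact ⟨Finset.subset_inter (hX e he.1) he.2.1, he.2.2⟩
  have h4 := Finset.card_le_card h3
  rw [Finset.card_powersetCard, hm] at h4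
  omega

lemma edgeSet_sub {k s : ℕ} {S e : Finset (Fin k × Fin s)} (h : e ∈ edgeSet S) : e ⊆ S :=
  (Finset.mem_powersetCard.1 h).1

lemma edge_total {k s : ℕ} (A B C D : Finset (Fin k × Fin s)) (m₁ m₂ m₃ : ℕ)
    (hA : IsTransversal A) (hB : IsTransversal B) (hC : IsTransversal C) (hD : IsTransversal D)
    (h1 : (A ∩ B).card = m₁) (h2 : ((A ∪ B) ∩ C).card = m₂)
    (h3 : ((A ∪ B ∪ C) ∩ D).card = m₃) :
    4 * k.choose 2 ≤ (edgeSet A ∪ edgeSet B ∪ edgeSet C ∪ edgeSet D).card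
      + (m₁.choose 2 + m₂.choose 2 + m₃.choose 2) := by
  have a0 : (edgeSet A).card = k.choose 2 := by
    rw [edgeSet, Finset.card_powersetCard, hA.card_eq]
  have a1 := edge_step (edgeSet A) A B m₁ (fun e he => edgeSet_sub he) hB h1
  have q2 : ∀ e ∈ edgeSet A ∪ edgeSet B, e ⊆ A ∪ B := by
    intro e he
    rcases Finset.mem_union.1 he with he | he
    · exact (edgeSet_sub he).trans Finset.subset_union_left
    · exact (edgeSet_sub he).trans Finset.subset_union_right
  have a2 := edge_step _ (A ∪ B) C m₂ q2 hC h2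
  have q3 : ∀ e ∈ edgeSet A ∪ edgeSet B ∪ edgeSet C, e ⊆ A ∪ B ∪ C := by
    intro e he
    rcases Finset.mem_union.1 he with he | he
    · exact (q2 e he).trans Finset.subset_union_left
    · exact (edgeSet_sub he).trans Finset.subset_union_right
  have a3 := edge_step _ (A ∪ B ∪ C) D m₃ q3 hD h3
  omega

open Classical in
lemma card_tuples {k s : ℕ} (m₁ m₂ m₃ : ℕ) (hm₁ : 3 ≤ m₁) (hm₂ : 3 ≤ m₂) (hm₃ : 3 ≤ m₃)
    (Q : Finset (Finset (Fin k × Fin s) × Finset (Fin k × Fin s) ×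
          Finset (Fin k × Fin s) × Finset (Fin k × Fin s)))
    (hQ : ∀ q ∈ Q, IsTransversal q.1 ∧ IsTransversal q.2.1 ∧ IsTransversal q.2.2.1 ∧
          IsTransversal q.2.2.2 ∧
        3 ≤ (q.1 ∩ q.2.1 ∩ q.2.2.1 ∩ q.2.2.2).card ∧
        (q.1 ∩ q.2.1).card = m₁ ∧ ((q.1 ∪ q.2.1) ∩ q.2.2.1).card = m₂ ∧
        ((q.1 ∪ q.2.1 ∪ q.2.2.1) ∩ q.2.2.2).card = m₃) :
    Q.card ≤ s ^ k * (k.choose 3 * ((1 * k).choose (m₁ - 3) * s ^ (k - m₁) *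
      ((2 * k).choose (m₂ - 3) * s ^ (k - m₂) *
        ((3 * k).choose (m₃ - 3) * s ^ (k - m₃))))) := by
  have hsub : Q ⊆ (Finset.univ.filter (fun S : Finset (Fin k × Fin s) =>
      IsTransversal S ∧ ∅ ⊆ S)).biUnion fun A => (A.powersetCard 3).biUnion fun T =>
        (potF A T m₁).biUnion fun B => (potF (A ∪ B) T m₂).biUnion fun C =>
          (potF (A ∪ B ∪ C) T m₃).image fun D => (A, B, C, D) := by
    rintro ⟨A, B, C, D⟩ hq
    obtain ⟨hA, hB, hC, hD, h0, h1, h2, h3⟩ := hQ _ hq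
    dsimp only at hA hB hC hD h0 h1 h2 h3
    obtain ⟨T, hT, hT3⟩ := Finset.exists_subset_card_eq h0
    simp only [Finset.subset_inter_iff] at hT
    obtain ⟨⟨⟨tA, tB⟩, tC⟩, tD⟩ := hT
    simp only [Finset.mem_biUnion, Finset.mem_image, potF, Finset.mem_filter, Finset.mem_univ,
      true_and, Finset.mem_powersetCard]
    exact ⟨A, ⟨hA, Finset.empty_subset _⟩, T, ⟨tA, hT3⟩, B, ⟨hB, tB, h1⟩, C, ⟨hC, tC, h2⟩,
      D, ⟨hD, tD, h3⟩, rfl⟩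
  refine (Finset.card_le_card hsub).trans ((Finset.card_biUnion_le_card_mul _ _ _ ?_).trans
    (Nat.mul_le_mul_right _ (by simpa using card_transversal_superset (k := k) (s := s) ∅)))
  intro A hA
  have hA : A.card = k := (Finset.mem_filter.1 hA).2.1.card_eq
  refine (Finset.card_biUnion_le_card_mul _ _ _ ?_).trans
    (Nat.mul_le_mul_right _ (by rw [Finset.card_powersetCard, hA]))
  intro T hT
  obtain ⟨hT, hT3⟩ := Finset.mem_powersetCard.1 hT
  refine (Finset.card_biUnion_le_card_mul _ _ _ ?_).trans
    (Nat.mul_le_mul_right _ (card_potF A T m₁ (1 * k) hT3 hT (by omega) hm₁))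
  intro B hB
  have hB : B.card = k := (Finset.mem_filter.1 hB).2.1.card_eq
  have hAB := Finset.card_union_le A B
  have hTB : T ⊆ A ∪ B := hT.trans Finset.subset_union_left
  refine (Finset.card_biUnion_le_card_mul _ _ _ ?_).trans
    (Nat.mul_le_mul_right _ (card_potF (A ∪ B) T m₂ (2 * k) hT3 hTB (by omega) hm₂))
  intro C hC
  have hC : C.card = k := (Finset.mem_filter.1 hC).2.1.card_eq
  have hABC := Finset.card_union_le (A ∪ B) C
  exact Finset.card_image_le.trans (card_potF (A ∪ B ∪ C) T m₃ (3 * k) hT3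
    (hTB.trans Finset.subset_union_left) (by omega) hm₃)

lemma spow_aux (k s m₁ m₂ m₃ : ℕ) (hs : 1 ≤ s) (hk : 3 ≤ k) (h₁ : m₁ ≤ k) (h₂ : m₂ ≤ k)
    (h₃ : m₃ ≤ k) :
    (s : ℝ) ^ k * (s : ℝ) ^ (k - m₁) * (s : ℝ) ^ (k - m₂) * (s : ℝ) ^ (k - m₃) =
    (s : ℝ) ^ (4 * k - 9) * (s : ℝ) ^ (-((m₁ : ℝ) - 3)) * (s : ℝ) ^ (-((m₂ : ℝ) - 3)) *
      (s : ℝ) ^ (-((m₃ : ℝ) - 3)) := by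
  have hs0 : (0 : ℝ) < s := by exact_mod_cast hs
  simp only [← Real.rpow_natCast, ← Real.rpow_add hs0]
  congr 1
  rw [Nat.cast_sub h₁, Nat.cast_sub h₂, Nat.cast_sub h₃, Nat.cast_sub (by omega)]
  push_cast
  ring

/-- The sum of `2^{-|E(S₁) ∪ E(S₂) ∪ E(S₃) ∪ E(S₄)|}` over all ordered 4-tuples
of transversals with `|S₁∩S₂∩S₃∩S₄| ≥ 3`, `|S₁∩S₂| = m₁`, `|(S₁∪S₂)∩S₃| = m₂`
and `|(S₁∪S₂∪S₃)∩S₄| = m₃` is at most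
`C(k,3)·s^{4k-9}·2^{-4C(k,2)+9} · ∏_{j=1}^3 C(jk, mⱼ-3)·s^{-(mⱼ-3)}·2^{C(mⱼ,2)-3}`. -/
theorem potential_of_profile_clusters (k s : ℕ) (hk : 3 ≤ k) (hs : 1 ≤ s)
    (m₁ m₂ m₃ : ℕ) (hm₁ : 3 ≤ m₁) (hm₁' : m₁ ≤ k) (hm₂ : 3 ≤ m₂) (hm₂' : m₂ ≤ k)
    (hm₃ : 3 ≤ m₃) (hm₃' : m₃ ≤ k) :
    ∑ᶠ q ∈ {q : Finset (Fin k × Fin s) × Finset (Fin k × Fin s) ×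
          Finset (Fin k × Fin s) × Finset (Fin k × Fin s) |
        IsTransversal q.1 ∧ IsTransversal q.2.1 ∧ IsTransversal q.2.2.1 ∧
          IsTransversal q.2.2.2 ∧
        3 ≤ (q.1 ∩ q.2.1 ∩ q.2.2.1 ∩ q.2.2.2).card ∧
        (q.1 ∩ q.2.1).card = m₁ ∧ ((q.1 ∪ q.2.1) ∩ q.2.2.1).card = m₂ ∧
        ((q.1 ∪ q.2.1 ∪ q.2.2.1) ∩ q.2.2.2).card = m₃},
        (2 : ℝ) ^ (-(((edgeSet q.1 ∪ edgeSet q.2.1 ∪ edgeSet q.2.2.1 ∪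
            edgeSet q.2.2.2).card : ℝ)))
      ≤ (Nat.choose k 3 : ℝ) * (s : ℝ) ^ (4 * k - 9) *
          (2 : ℝ) ^ (-(4 * (Nat.choose k 2 : ℝ)) + 9) *
        ((Nat.choose (1 * k) (m₁ - 3) : ℝ) * (s : ℝ) ^ (-((m₁ : ℝ) - 3)) *
            (2 : ℝ) ^ ((Nat.choose m₁ 2 : ℝ) - 3) *
          ((Nat.choose (2 * k) (m₂ - 3) : ℝ) * (s : ℝ) ^ (-((m₂ : ℝ) - 3)) *
            (2 : ℝ) ^ ((Nat.choose m₂ 2 : ℝ) - 3)) *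
          ((Nat.choose (3 * k) (m₃ - 3) : ℝ) * (s : ℝ) ^ (-((m₃ : ℝ) - 3)) *
            (2 : ℝ) ^ ((Nat.choose m₃ 2 : ℝ) - 3))) := by
  classical
  set Q : Finset (Finset (Fin k × Fin s) × Finset (Fin k × Fin s) ×
          Finset (Fin k × Fin s) × Finset (Fin k × Fin s)) :=
    Finset.univ.filter (fun q => IsTransversal q.1 ∧ IsTransversal q.2.1 ∧
          IsTransversal q.2.2.1 ∧ IsTransversal q.2.2.2 ∧
        3 ≤ (q.1 ∩ q.2.1 ∩ q.2.2.1 ∩ q.2.2.2).card ∧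
        (q.1 ∩ q.2.1).card = m₁ ∧ ((q.1 ∪ q.2.1) ∩ q.2.2.1).card = m₂ ∧
        ((q.1 ∪ q.2.1 ∪ q.2.2.1) ∩ q.2.2.2).card = m₃) with hQdef
  have hQ := fun q (hq : q ∈ Q) => (Finset.mem_filter.1 hq).2
  rw [finsum_mem_eq_sum_of_inter_support_eq (t := Q) _ (by
    congr 1
    ext q
    simp [hQdef])]
  have hcard := card_tuples m₁ m₂ m₃ hm₁ hm₂ hm₃ Q hQ
  have hcard' : (Q.card : ℝ) ≤ (s : ℝ) ^ k * (k.choose 3 * ((1 * k).choose (m₁ - 3) *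
      (s : ℝ) ^ (k - m₁) * ((2 * k).choose (m₂ - 3) * (s : ℝ) ^ (k - m₂) *
        ((3 * k).choose (m₃ - 3) * (s : ℝ) ^ (k - m₃))))) := by exact_mod_cast hcard
  set P : ℝ := (2 : ℝ) ^ (-(4 * (Nat.choose k 2 : ℝ)) + (m₁.choose 2 + m₂.choose 2 + m₃.choose 2))
    with hP
  have hterm : ∀ q ∈ Q, (2 : ℝ) ^ (-(((edgeSet q.1 ∪ edgeSet q.2.1 ∪ edgeSet q.2.2.1 ∪
            edgeSet q.2.2.2).card : ℝ))) ≤ P := by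
    intro q hq
    obtain ⟨hA, hB, hC, hD, -, h1, h2, h3⟩ := hQ q hq
    have ht := edge_total _ _ _ _ m₁ m₂ m₃ hA hB hC hD h1 h2 h3
    have ht' : (4 * k.choose 2 : ℝ) ≤ ((edgeSet q.1 ∪ edgeSet q.2.1 ∪ edgeSet q.2.2.1 ∪
        edgeSet q.2.2.2).card : ℝ) + (m₁.choose 2 + m₂.choose 2 + m₃.choose 2) := by
      exact_mod_cast ht
    exact Real.rpow_le_rpow_of_exponent_le (by norm_num) (by linarith)
  have hPe : P = (2 : ℝ) ^ (-(4 * (Nat.choose k 2 : ℝ)) + 9) *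
      (2 : ℝ) ^ ((Nat.choose m₁ 2 : ℝ) - 3) * (2 : ℝ) ^ ((Nat.choose m₂ 2 : ℝ) - 3) *
      (2 : ℝ) ^ ((Nat.choose m₃ 2 : ℝ) - 3) := by
    simp only [hP, ← Real.rpow_add (show (0 : ℝ) < 2 by norm_num)]
    congr 1
    ring
  have hP0 : 0 ≤ P := by positivity
  have hsp := spow_aux k s m₁ m₂ m₃ hs hk hm₁' hm₂' hm₃'
  refine (Finset.sum_le_card_nsmul _ _ P hterm).trans ?_
  rw [nsmul_eq_mul]
  refine (mul_le_mul_of_nonneg_right hcard' hP0).trans (le_of_eq ?_)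
  rw [hPe]
  generalize (2 : ℝ) ^ (-(4 * (Nat.choose k 2 : ℝ)) + 9) = a at *
  linear_combination ((k.choose 3 : ℝ) * ((1 * k).choose (m₁ - 3) : ℝ) *
    ((2 * k).choose (m₂ - 3) : ℝ) * ((3 * k).choose (m₃ - 3) : ℝ) * a *
      (2 : ℝ) ^ ((Nat.choose m₁ 2 : ℝ) - 3) * (2 : ℝ) ^ ((Nat.choose m₂ 2 : ℝ) - 3) *
      (2 : ℝ) ^ ((Nat.choose m₃ 2 : ℝ) - 3)) * hsp
end

section
/- There exists K such that the following holds for every integer k ≥ K and every integer s with (s : ℝ) ≥ 2^{(k+9)/2}: letting ℱ denote the family of edge sets of all transversals of Fin k × Fin s, letting ℱ₂⁴ denote the family of all clusters, and letting X denote the set of all 2-element subsets of Fin k × Fin s whose two elements lie in different classes (so |X| = C(k,2)·s²), one has ∑_{F ∈ ℱ} 2^{−|F|} > 16·|X|·( (∑_{F ∈ ℱ₂⁴} 2^{−|F|})^{1/4} + 1/4 ). -/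
/-- `F` is a cluster: it is the union of the edge sets of four pairwise
distinct transversals whose edge sets share at least two elements. -/
def IsCluster {k s : ℕ} (F : Finset (Finset (Fin k × Fin s))) : Prop :=
  ∃ S₁ S₂ S₃ S₄ : Finset (Fin k × Fin s),
    IsTransversal S₁ ∧ IsTransversal S₂ ∧ IsTransversal S₃ ∧ IsTransversal S₄ ∧
    S₁ ≠ S₂ ∧ S₁ ≠ S₃ ∧ S₁ ≠ S₄ ∧ S₂ ≠ S₃ ∧ S₂ ≠ S₄ ∧ S₃ ≠ S₄ ∧
    2 ≤ (edgeSet S₁ ∩ edgeSet S₂ ∩ edgeSet S₃ ∩ edgeSet S₄).card ∧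
    F = edgeSet S₁ ∪ edgeSet S₂ ∪ edgeSet S₃ ∪ edgeSet S₄

/-- The board `X`: all 2-element subsets of `Fin k × Fin s` whose two elements
lie in different classes. -/
def board (k s : ℕ) : Finset (Finset (Fin k × Fin s)) :=
  Finset.univ.filter (fun e => e.card = 2 ∧ (e.image Prod.fst).card = 2)

section helpers

open Finset

/-- numeric inequality -/
lemma aux_num (m n : ℕ) (hn : n ≤ m) (h14 : 14 ≤ m) (hm : (9 * m ^ 2) ^ 2 ≤ 2 ^ m) :
    (m.choose n * 3 ^ n) ^ 2 * 2 ^ (n * n) ≤ 2 ^ (n * (m + 7)) := by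
  obtain ⟨d, rfl⟩ := Nat.exists_eq_add_of_le hn
  have e : n * (n + d + 7) = n * (d + 7) + n * n := by ring
  rw [e, pow_add]
  apply Nat.mul_le_mul_right
  by_cases h : 2 * n ≤ n + d
  · have h1 : (9 * (n + d) ^ 2) ≤ 2 ^ (d + 7) := by
      have : (9 * (n + d) ^ 2) ^ 2 ≤ (2 ^ (d + 7)) ^ 2 := by
        refine hm.trans ?_
        rw [← pow_mul]
        exact Nat.pow_le_pow_right (by norm_num) (by omega)
      exact (Nat.pow_le_pow_iff_left (by norm_num)).1 this
    calc ((n + d).choose n * 3 ^ n) ^ 2 ≤ ((n + d) ^ n * 3 ^ n) ^ 2 := by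
          gcongr; exact Nat.choose_le_pow _ _
      _ = (9 * (n + d) ^ 2) ^ n := by
          rw [← mul_pow, ← pow_mul, mul_comm n 2, pow_mul]; congr 1; ring
      _ ≤ (2 ^ (d + 7)) ^ n := by gcongr
      _ = _ := by rw [← pow_mul]; congr 1; ring
  · have h1 : (n + d).choose n * 3 ^ n ≤ 4 ^ (n + d) := by
      have : (4 : ℕ) ^ (n + d) = (3 + 1) ^ (n + d) := by norm_num
      rw [this, add_pow]
      have := Finset.single_le_sum (f := fun i => 3 ^ i * 1 ^ (n + d - i) * (n + d).choose i)
        (s := range (n + d + 1)) (fun i _ => Nat.zero_le _) (a := n) (by simp)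
      simp at this ⊢
      rw [mul_comm]; exact this
    calc ((n + d).choose n * 3 ^ n) ^ 2 ≤ (4 ^ (n + d)) ^ 2 := by gcongr
      _ = 2 ^ (4 * (n + d)) := by
          rw [← pow_mul, show (4 : ℕ) = 2 ^ 2 by norm_num, ← pow_mul]; congr 1; ring
      _ ≤ _ := by
          apply Nat.pow_le_pow_right (by norm_num)
          have : 7 ≤ n := by omega
          nlinarith [Nat.mul_le_mul_right d this]

lemma aux_term (k m s n : ℕ) (hk : k = m + 3) (hn : n ≤ m) (h14 : 14 ≤ m)
    (hm : (9 * m ^ 2) ^ 2 ≤ 2 ^ m) (hs : 2 ^ (k + 9) ≤ s ^ 2) :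
    m.choose n * 3 ^ n * 2 ^ ((n + 3).choose 2) ≤ 8 * s ^ n := by
  have hc : (n + 3).choose 2 * 2 = (n + 3) * (n + 2) := by
    have := Nat.triangle_succ (n + 2)
    rw [Nat.choose_two_right]
    exact Nat.div_mul_cancel (Nat.even_mul_pred_self (n + 3)).two_dvd
  have : (m.choose n * 3 ^ n * 2 ^ ((n + 3).choose 2)) ^ 2 ≤ (8 * s ^ n) ^ 2 := by
    calc (m.choose n * 3 ^ n * 2 ^ ((n + 3).choose 2)) ^ 2
        = (m.choose n * 3 ^ n) ^ 2 * 2 ^ (n * n) * 2 ^ (5 * n + 6) := by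
          rw [mul_pow _ (2 ^ _), ← pow_mul, hc, mul_assoc, ← pow_add]; congr 2; ring
      _ ≤ 2 ^ (n * (m + 7)) * 2 ^ (5 * n + 6) := by
          gcongr; exact aux_num m n hn h14 hm
      _ = 64 * (2 ^ (k + 9)) ^ n := by
          rw [← pow_mul, ← pow_add, show (64 : ℕ) = 2 ^ 6 by norm_num, ← pow_add, hk]
          congr 1; ring
      _ ≤ 64 * (s ^ 2) ^ n := by gcongr
      _ = _ := by rw [mul_pow, ← pow_mul, ← pow_mul, mul_comm n 2]; norm_num
  exact (Nat.pow_le_pow_iff_left (by norm_num)).1 this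

/-- weighted count of the extensions -/
lemma aux_count (k m s : ℕ) (hk : k = m + 3) (h14 : 14 ≤ m)
    (hm : (9 * m ^ 2) ^ 2 ≤ 2 ^ m) (hs : 2 ^ (k + 9) ≤ s ^ 2)
    (D : Fin k → Finset (Fin s)) (hD : ∀ i, (D i).card ≤ 3) (g : Fin k → Fin s)
    (C : Finset (Fin k)) (hC : C.card = 3) (hg : ∀ i ∈ C, g i ∈ D i) :
    ∑ f ∈ univ.filter (fun f : Fin k → Fin s => ∀ i ∈ C, f i = g i),
      2 ^ ((univ.filter (fun i => f i ∈ D i)).card.choose 2) ≤ 8 * k * s ^ m := by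
  classical
  have hCc : Cᶜ.card = m := by rw [card_compl, hC]; simp [hk]
  set P := univ.filter (fun f : Fin k → Fin s => ∀ i ∈ C, f i = g i) with hP
  let A : (Fin k → Fin s) → Finset (Fin k) := fun f => Cᶜ.filter (fun i => f i ∈ D i)
  have hA : ∀ f ∈ P, (univ.filter (fun i => f i ∈ D i)).card = (A f).card + 3 := by
    intro f hf
    have : univ.filter (fun i => f i ∈ D i) = A f ∪ C := by
      ext i
      have h1 := (mem_filter.1 hf).2 i
      have h2 := hg i
      simp only [A, mem_filter, mem_univ, true_and, mem_union, mem_compl]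
      by_cases hi : i ∈ C
      · simp [hi, h1 hi, h2 hi]
      · simp [hi]
    rw [this, card_union_of_disjoint, hC]
    exact disjoint_of_subset_left (filter_subset _ _) (disjoint_compl_left)
  have hmaps : ∀ f ∈ P, A f ∈ Cᶜ.powerset := fun f _ => mem_powerset.2 (filter_subset _ _)
  rw [← sum_fiberwise_of_maps_to hmaps]
  have hfib : ∀ B ∈ Cᶜ.powerset,
      ∑ f ∈ P.filter (fun f => A f = B), 2 ^ ((univ.filter (fun i => f i ∈ D i)).card.choose 2)
        ≤ 3 ^ B.card * s ^ (m - B.card) * 2 ^ ((B.card + 3).choose 2) := by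
    intro B hB
    have hB' := mem_powerset.1 hB
    rw [sum_congr rfl (g := fun _ => 2 ^ ((B.card + 3).choose 2))]
    · rw [sum_const, smul_eq_mul]
      apply Nat.mul_le_mul_right
      calc _ ≤ (Fintype.piFinset (fun i => if i ∈ C then {g i} else if i ∈ B then D i
                else univ)).card := by
            apply card_le_card
            intro f hf
            rw [mem_filter, mem_filter] at hf
            rw [Fintype.mem_piFinset]
            intro i
            split_ifs with h1 h2
            · simpa using hf.1.2 i h1
            · have : i ∈ A f := hf.2 ▸ h2
              exact (mem_filter.1 this).2
            · simp
        _ = ∏ i, (if i ∈ C then 1 else if i ∈ B then (D i).card else s) := by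
            rw [Fintype.card_piFinset]
            apply prod_congr rfl
            intro i _
            split_ifs <;> simp
        _ ≤ ∏ i, (if i ∈ C then 1 else if i ∈ B then 3 else s) := by
            apply prod_le_prod' 
            intro i _
            split_ifs
            · exact le_rfl
            · exact hD i
            · exact le_rfl
        _ = _ := by
            rw [← prod_mul_prod_compl C, prod_congr rfl (g := fun _ => 1) (fun i hi => by simp [hi]),
              prod_const_one, one_mul,
              prod_congr rfl (s₁ := Cᶜ) (g := fun i => if i ∈ B then 3 else s)
                (fun i hi => by simp [mem_compl.1 hi]), prod_ite, prod_const, prod_const]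
            have e1 : Cᶜ.filter (fun i => i ∈ B) = B := by
              ext i; simp only [mem_filter]; exact ⟨fun h => h.2, fun h => ⟨hB' h, h⟩⟩
            have e2 : Cᶜ.filter (fun i => i ∉ B) = Cᶜ \ B := by
              ext i; simp
            rw [e1, e2, card_sdiff_of_subset hB', hCc]
    · intro f hf
      rw [mem_filter] at hf
      rw [hA f hf.1, hf.2]
  refine (sum_le_sum hfib).trans ?_
  rw [sum_powerset_apply_card (fun n => 3 ^ n * s ^ (m - n) * 2 ^ ((n + 3).choose 2)), hCc]
  calc _ ≤ ∑ n ∈ range (m + 1), 8 * s ^ m := by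
        apply sum_le_sum
        intro n hn
        have hn : n ≤ m := by simpa [Nat.lt_succ_iff] using hn
        have := aux_term k m s n hk hn h14 hm hs
        calc _ = m.choose n * 3 ^ n * 2 ^ ((n + 3).choose 2) * s ^ (m - n) := by
              simp only [smul_eq_mul]; ring
          _ ≤ 8 * s ^ n * s ^ (m - n) := by gcongr
          _ = _ := by rw [mul_assoc, ← pow_add]; congr 2; omega
    _ = 8 * (m + 1) * s ^ m := by simp; ring
    _ ≤ _ := by gcongr; omega

/-- graph of a function -/
def tr {k s : ℕ} (f : Fin k → Fin s) : Finset (Fin k × Fin s) := univ.image (fun i => (i, f i))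

lemma mem_tr {k s : ℕ} (f : Fin k → Fin s) (v : Fin k × Fin s) : v ∈ tr f ↔ v.2 = f v.1 := by
  simp only [tr, mem_image, mem_univ, true_and]
  constructor
  · rintro ⟨i, rfl⟩; rfl
  · intro h; exact ⟨v.1, by rw [← h]⟩

lemma card_tr {k s : ℕ} (f : Fin k → Fin s) : (tr f).card = k := by
  rw [tr, card_image_of_injective _ (fun a b h => (Prod.mk.inj h).1)]; simp

lemma isTransversal_iff {k s : ℕ} (S : Finset (Fin k × Fin s)) :
    IsTransversal S ↔ ∃ f, S = tr f := by
  constructor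
  · intro h
    have : ∀ i, ∃ j, S.filter (fun v => v.1 = i) = {(i, j)} := by
      intro i
      obtain ⟨v, hv⟩ := card_eq_one.1 (h i)
      have : v ∈ S.filter (fun v => v.1 = i) := by rw [hv]; simp
      have h2 := (mem_filter.1 this).2
      exact ⟨v.2, by rw [hv, ← h2]⟩
    choose f hf using this
    refine ⟨f, ?_⟩
    ext ⟨i, j⟩
    rw [mem_tr]
    have : (i, j) ∈ S.filter (fun v => v.1 = i) ↔ j = f i := by rw [hf]; simp
    simpa using this
  · rintro ⟨f, rfl⟩ i
    rw [card_eq_one]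
    refine ⟨(i, f i), ?_⟩
    ext ⟨a, b⟩
    simp only [mem_filter, mem_tr, mem_singleton, Prod.mk.injEq]
    constructor
    · rintro ⟨h, rfl⟩; exact ⟨rfl, h⟩
    · rintro ⟨rfl, rfl⟩; exact ⟨rfl, rfl⟩

lemma card_edge_tr {k s : ℕ} (f : Fin k → Fin s) : (edgeSet (tr f)).card = k.choose 2 := by
  rw [edgeSet, card_powersetCard, card_tr]

lemma edge_tr_inj {k s : ℕ} (hk : 2 ≤ k) :
    Function.Injective (fun f : Fin k → Fin s => edgeSet (tr f)) := by
  intro f g h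
  have h1 : tr f = tr g := by
    have hf := powersetCard_sup (tr f) 1 (by rw [card_tr]; omega)
    have hg := powersetCard_sup (tr g) 1 (by rw [card_tr]; omega)
    rw [← hf, ← hg]
    simp only [edgeSet] at h
    rw [h]
  funext i
  have : (i, f i) ∈ tr g := by rw [← h1, mem_tr]
  exact (mem_tr _ _).1 this

/-- New edges. -/
lemma aux_new {k s : ℕ} (U : Finset (Finset (Fin k × Fin s))) (D : Fin k → Finset (Fin s))
    (hU : ∀ e ∈ U, ∀ v ∈ e, v.2 ∈ D v.1) (f : Fin k → Fin s) :
    U.card + k.choose 2 ≤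
      (U ∪ edgeSet (tr f)).card + (univ.filter (fun i => f i ∈ D i)).card.choose 2 := by
  classical
  rw [← card_edge_tr f, ← card_union_add_card_inter U]
  apply Nat.add_le_add_left
  have : U ∩ edgeSet (tr f) ⊆
      ((univ.filter (fun i => f i ∈ D i)).image (fun i => (i, f i))).powersetCard 2 := by
    intro e he
    rw [mem_inter, edgeSet, mem_powersetCard] at he
    rw [mem_powersetCard]
    refine ⟨?_, he.2.2⟩
    intro v hv
    have h1 := hU e he.1 v hv
    have h2 := (mem_tr _ _).1 (he.2.1 hv)
    rw [mem_image]
    refine ⟨v.1, ?_, by rw [← h2]⟩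
    simp [← h2, h1]
  refine (card_le_card this).trans ?_
  rw [card_powersetCard]
  exact Nat.choose_le_choose _ card_image_le

lemma aux_board (k s : ℕ) : 2 * (board k s).card ≤ k ^ 2 * s ^ 2 := by
  have : board k s ⊆ (univ : Finset (Fin k × Fin s)).powersetCard 2 := by
    intro e he
    rw [mem_powersetCard]
    exact ⟨subset_univ _, (mem_filter.1 he).2.1⟩
  have h := card_le_card this
  rw [card_powersetCard, card_univ, Fintype.card_prod, Fintype.card_fin, Fintype.card_fin,
    Nat.choose_two_right] at h
  have h2 := Nat.div_mul_le_self (k * s * (k * s - 1)) 2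
  have h3 : k * s * (k * s - 1) ≤ (k * s) * (k * s) := Nat.mul_le_mul_left _ (Nat.sub_le _ _)
  nlinarith

/-- union of the four edge sets -/
def un4 {k s : ℕ} (f₁ f₂ f₃ f₄ : Fin k → Fin s) : Finset (Finset (Fin k × Fin s)) :=
  edgeSet (tr f₁) ∪ edgeSet (tr f₂) ∪ edgeSet (tr f₃) ∪ edgeSet (tr f₄)

/-- number of repeated edges of `f` when the previous values are `D` -/
def rep {k s : ℕ} (D : Fin k → Finset (Fin s)) (f : Fin k → Fin s) : ℕ :=
  (univ.filter (fun i => f i ∈ D i)).card.choose 2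

lemma aux_un4 {k s : ℕ} (f₁ f₂ f₃ f₄ : Fin k → Fin s) :
    4 * k.choose 2 ≤ (un4 f₁ f₂ f₃ f₄).card + rep (fun i => {f₁ i}) f₂ +
      rep (fun i => {f₁ i, f₂ i}) f₃ + rep (fun i => {f₁ i, f₂ i, f₃ i}) f₄ := by
  have key : ∀ f : Fin k → Fin s, ∀ e ∈ edgeSet (tr f), ∀ v ∈ e, v.2 = f v.1 := by
    intro f e he v hv
    exact (mem_tr _ _).1 ((mem_powersetCard.1 he).1 hv)
  have h1 := aux_new (edgeSet (tr f₁)) (fun i => {f₁ i}) (by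
    intro e he v hv; simp [key f₁ e he v hv]) f₂
  have h2 := aux_new (edgeSet (tr f₁) ∪ edgeSet (tr f₂)) (fun i => {f₁ i, f₂ i}) (by
    intro e he v hv
    rcases mem_union.1 he with he | he
    · simp [key _ e he v hv]
    · simp [key _ e he v hv]) f₃
  have h3 := aux_new (edgeSet (tr f₁) ∪ edgeSet (tr f₂) ∪ edgeSet (tr f₃))
    (fun i => {f₁ i, f₂ i, f₃ i}) (by
    intro e he v hv
    rcases mem_union.1 he with he | he
    · rcases mem_union.1 he with he | he
      · simp [key _ e he v hv]
      · simp [key _ e he v hv]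
    · simp [key _ e he v hv]) f₄
  have h0 := card_edge_tr f₁
  simp only [un4, rep] at h1 h2 h3 ⊢
  omega

/-- functions agreeing with `g` on `C` -/
def ext4 {k s : ℕ} (C : Finset (Fin k)) (g : Fin k → Fin s) : Finset (Fin k → Fin s) :=
  univ.filter (fun f : Fin k → Fin s => ∀ i ∈ C, f i = g i)

lemma aux_total (k m s : ℕ) (hk : k = m + 3) (h14 : 14 ≤ m)
    (hm : (9 * m ^ 2) ^ 2 ≤ 2 ^ m) (hs : 2 ^ (k + 9) ≤ s ^ 2) :
    ∑ C ∈ (univ : Finset (Fin k)).powersetCard 3, ∑ f₁ : Fin k → Fin s, ∑ f₂ ∈ ext4 C f₁,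
      ∑ f₃ ∈ ext4 C f₁, ∑ f₄ ∈ ext4 C f₁,
        2 ^ (rep (fun i => {f₁ i}) f₂ + rep (fun i => {f₁ i, f₂ i}) f₃ +
          rep (fun i => {f₁ i, f₂ i, f₃ i}) f₄) ≤ 512 * k ^ 6 * (s ^ k * (s ^ m) ^ 3) := by
  set G := 8 * k * s ^ m with hG
  have step : ∀ C ∈ (univ : Finset (Fin k)).powersetCard 3, ∀ f₁ : Fin k → Fin s,
      ∑ f₂ ∈ ext4 C f₁, ∑ f₃ ∈ ext4 C f₁, ∑ f₄ ∈ ext4 C f₁,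
        2 ^ (rep (fun i => {f₁ i}) f₂ + rep (fun i => {f₁ i, f₂ i}) f₃ +
          rep (fun i => {f₁ i, f₂ i, f₃ i}) f₄) ≤ G * G * G := by
    intro C hC f₁
    have hC := (mem_powersetCard.1 hC).2
    simp only [pow_add, ← mul_sum]
    calc _ ≤ ∑ f₂ ∈ ext4 C f₁, ∑ f₃ ∈ ext4 C f₁, 2 ^ (rep (fun i => {f₁ i}) f₂) *
            2 ^ rep (fun i => {f₁ i, f₂ i}) f₃ * G := by
          refine sum_le_sum fun f₂ _ => sum_le_sum fun f₃ _ => Nat.mul_le_mul_left _ ?_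
          exact aux_count k m s hk h14 hm hs (fun i => {f₁ i, f₂ i, f₃ i})
            (fun i => card_le_three) f₁ C hC (fun i _ => by simp)
      _ = ∑ f₂ ∈ ext4 C f₁, 2 ^ (rep (fun i => {f₁ i}) f₂) *
            (∑ f₃ ∈ ext4 C f₁, 2 ^ rep (fun i => {f₁ i, f₂ i}) f₃) * G := by
          simp only [← sum_mul, ← mul_sum]
      _ ≤ ∑ f₂ ∈ ext4 C f₁, 2 ^ (rep (fun i => {f₁ i}) f₂) * G * G := by
          refine sum_le_sum fun f₂ _ => Nat.mul_le_mul_right _ (Nat.mul_le_mul_left _ ?_)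
          exact aux_count k m s hk h14 hm hs (fun i => {f₁ i, f₂ i})
            (fun i => card_le_two.trans (by norm_num)) f₁ C hC (fun i _ => by simp)
      _ = (∑ f₂ ∈ ext4 C f₁, 2 ^ (rep (fun i => {f₁ i}) f₂)) * G * G := by
          simp only [← sum_mul]
      _ ≤ _ := by
          refine Nat.mul_le_mul_right _ (Nat.mul_le_mul_right _ ?_)
          exact aux_count k m s hk h14 hm hs (fun i => {f₁ i})
            (fun i => by simp) f₁ C hC (fun i _ => by simp)
  calc _ ≤ ∑ C ∈ (univ : Finset (Fin k)).powersetCard 3, ∑ f₁ : Fin k → Fin s, G * G * G :=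
        sum_le_sum fun C hC => sum_le_sum fun f₁ _ => step C hC f₁
    _ = k.choose 3 * (s ^ k * (G * G * G)) := by simp
    _ ≤ k ^ 3 * (s ^ k * (G * G * G)) := by gcongr; exact Nat.choose_le_pow _ _
    _ = _ := by rw [hG]; ring

lemma sum_image_le_aux {α β : Type*} [DecidableEq β] (Q : Finset α) (U : α → β) (w : β → ℝ)
    (hw : ∀ b, 0 ≤ w b) (T : Finset β) (hT : ∀ b ∈ T, ∃ a ∈ Q, U a = b) :
    ∑ b ∈ T, w b ≤ ∑ a ∈ Q, w (U a) := by
  classical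
  rw [← sum_fiberwise_of_maps_to (s := Q) (t := Q.image U) (g := U)
    (fun a ha => mem_image_of_mem _ ha)]
  calc ∑ b ∈ T, w b ≤ ∑ b ∈ Q.image U, w b := by
        apply sum_le_sum_of_subset_of_nonneg
        · intro b hb
          obtain ⟨a, ha, rfl⟩ := hT b hb
          exact mem_image_of_mem _ ha
        · intros; exact hw _
    _ ≤ _ := by
        apply sum_le_sum
        intro b hb
        obtain ⟨a, ha, rfl⟩ := mem_image.1 hb
        exact single_le_sum (f := fun a => w (U a)) (fun i _ => hw _)
          (mem_filter.2 ⟨ha, rfl⟩)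

lemma aux_cluster {k s : ℕ} (F : Finset (Finset (Fin k × Fin s))) (hF : IsCluster F) :
    ∃ C ∈ (univ : Finset (Fin k)).powersetCard 3, ∃ f₁ : Fin k → Fin s, ∃ f₂ ∈ ext4 C f₁,
      ∃ f₃ ∈ ext4 C f₁, ∃ f₄ ∈ ext4 C f₁, un4 f₁ f₂ f₃ f₄ = F := by
  obtain ⟨S₁, S₂, S₃, S₄, h1, h2, h3, h4, -, -, -, -, -, -, hc, rfl⟩ := hF
  obtain ⟨f₁, rfl⟩ := (isTransversal_iff _).1 h1
  obtain ⟨f₂, rfl⟩ := (isTransversal_iff _).1 h2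
  obtain ⟨f₃, rfl⟩ := (isTransversal_iff _).1 h3
  obtain ⟨f₄, rfl⟩ := (isTransversal_iff _).1 h4
  set A := univ.filter (fun i => f₂ i = f₁ i ∧ f₃ i = f₁ i ∧ f₄ i = f₁ i) with hA
  have hsub : edgeSet (tr f₁) ∩ edgeSet (tr f₂) ∩ edgeSet (tr f₃) ∩ edgeSet (tr f₄) ⊆
      (A.image (fun i => (i, f₁ i))).powersetCard 2 := by
    intro e he
    simp only [mem_inter, edgeSet, mem_powersetCard] at he
    obtain ⟨⟨⟨a1, a2⟩, a3⟩, a4⟩ := he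
    rw [mem_powersetCard]
    refine ⟨fun v hv => ?_, a1.2⟩
    have b1 := (mem_tr _ _).1 (a1.1 hv)
    have b2 := (mem_tr _ _).1 (a2.1 hv)
    have b3 := (mem_tr _ _).1 (a3.1 hv)
    have b4 := (mem_tr _ _).1 (a4.1 hv)
    rw [mem_image]
    refine ⟨v.1, ?_, by rw [← b1]⟩
    simp [hA, ← b1, ← b2, ← b3, ← b4]
  have h5 := card_le_card hsub
  rw [card_powersetCard] at h5
  have h6 : 3 ≤ A.card := by
    by_contra! h
    have h7 : (A.image (fun i => (i, f₁ i))).card ≤ 2 := card_image_le.trans (by omega)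
    have h8 := Nat.choose_le_choose 2 h7
    simp at h8
    omega
  obtain ⟨C, hCA, hC⟩ := exists_subset_card_eq h6
  have hAm : ∀ i ∈ C, f₂ i = f₁ i ∧ f₃ i = f₁ i ∧ f₄ i = f₁ i :=
    fun i hi => (mem_filter.1 (hCA hi)).2
  refine ⟨C, mem_powersetCard.2 ⟨subset_univ _, hC⟩, f₁, f₂, ?_, f₃, ?_, f₄, ?_, rfl⟩
  · exact mem_filter.2 ⟨mem_univ _, fun i hi => (hAm i hi).1⟩
  · exact mem_filter.2 ⟨mem_univ _, fun i hi => (hAm i hi).2.1⟩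
  · exact mem_filter.2 ⟨mem_univ _, fun i hi => (hAm i hi).2.2⟩

lemma aux_T2 (k m s : ℕ) (hk : k = m + 3) (h14 : 14 ≤ m)
    (hm : (9 * m ^ 2) ^ 2 ≤ 2 ^ m) (hs : 2 ^ (k + 9) ≤ s ^ 2) :
    ∑ᶠ F ∈ {F : Finset (Finset (Fin k × Fin s)) | IsCluster F}, (2 : ℝ) ^ (-(F.card : ℝ)) ≤
      512 * (k : ℝ) ^ 6 * ((s : ℝ) ^ k * ((s : ℝ) ^ m) ^ 3) / (2 ^ (k.choose 2)) ^ 4 := by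
  classical
  rw [finsum_mem_eq_finite_toFinset_sum _ (Set.toFinite _)]
  let Q := ((univ : Finset (Fin k)).powersetCard 3).sigma fun C =>
    (univ : Finset (Fin k → Fin s)).sigma fun f₁ => (ext4 C f₁).sigma fun _ =>
      (ext4 C f₁).sigma fun _ => ext4 C f₁
  have h1 := sum_image_le_aux Q (fun q => un4 q.2.1 q.2.2.1 q.2.2.2.1 q.2.2.2.2)
    (fun F => (2 : ℝ) ^ (-(F.card : ℝ))) (fun F => by positivity)
    ((Set.toFinite {F : Finset (Finset (Fin k × Fin s)) | IsCluster F}).toFinset) (by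
      intro F hF
      rw [Set.Finite.mem_toFinset] at hF
      obtain ⟨C, hC, f₁, f₂, h2, f₃, h3, f₄, h4, h⟩ := aux_cluster F hF
      refine ⟨⟨C, f₁, f₂, f₃, f₄⟩, ?_, h⟩
      simp only [Q, mem_sigma]
      exact ⟨hC, mem_univ _, h2, h3, h4⟩)
  refine h1.trans ?_
  have h2 := aux_total k m s hk h14 hm hs
  have h2' := (Nat.cast_le (α := ℝ)).2 h2
  push_cast at h2'
  rw [le_div_iff₀ (by positivity), sum_mul]
  refine le_trans ?_ h2'
  simp only [Q, sum_sigma]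
  refine sum_le_sum fun C _ => sum_le_sum fun f₁ _ => sum_le_sum fun f₂ _ =>
    sum_le_sum fun f₃ _ => sum_le_sum fun f₄ _ => ?_
  have h3 := aux_un4 f₁ f₂ f₃ f₄
  rw [Real.rpow_neg (by norm_num), Real.rpow_natCast, ← pow_mul, inv_mul_le_iff₀ (by positivity),
    ← pow_add]
  apply pow_le_pow_right₀ (by norm_num)
  omega

lemma aux_T1 (k s : ℕ) (hk : 2 ≤ k) :
    ∑ᶠ F ∈ {F : Finset (Finset (Fin k × Fin s)) |
          ∃ S : Finset (Fin k × Fin s), IsTransversal S ∧ F = edgeSet S},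
          (2 : ℝ) ^ (-(F.card : ℝ)) = (s : ℝ) ^ k / 2 ^ (k.choose 2) := by
  classical
  have : {F : Finset (Finset (Fin k × Fin s)) |
      ∃ S : Finset (Fin k × Fin s), IsTransversal S ∧ F = edgeSet S} =
      ((univ.image (fun f : Fin k → Fin s => edgeSet (tr f)) :
        Finset (Finset (Finset (Fin k × Fin s)))) : Set (Finset (Finset (Fin k × Fin s)))) := by
    ext F
    simp only [isTransversal_iff, Set.mem_setOf_eq, coe_image, coe_univ, Set.image_univ,
      Set.mem_range]
    constructor
    · rintro ⟨S, ⟨f, rfl⟩, rfl⟩; exact ⟨f, rfl⟩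
    · rintro ⟨f, rfl⟩; exact ⟨_, ⟨f, rfl⟩, rfl⟩
  rw [this, finsum_mem_coe_finset, sum_image (fun a _ b _ h => edge_tr_inj hk h)]
  simp only [card_edge_tr]
  rw [Real.rpow_neg (by norm_num), Real.rpow_natCast]
  simp [div_eq_mul_inv]

lemma aux_final (k m s : ℕ) (hk : k = m + 3) (h14 : 14 ≤ m) (hbig : 2 ^ 41 * k ^ 28 ≤ 2 ^ k)
    (hs : 2 ^ (k + 9) ≤ s ^ 2) :
    2 ^ 25 * k ^ 14 ≤ s ∧ 4 * k ^ 2 * 2 ^ (k.choose 2) < s ^ (m + 1) ∧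
      (9 * m ^ 2) ^ 2 ≤ 2 ^ m := by
  refine ⟨?_, ?_, ?_⟩
  · refine (Nat.pow_le_pow_iff_left (n := 2) (by norm_num)).1 ?_
    calc (2 ^ 25 * k ^ 14) ^ 2 = 2 ^ 9 * (2 ^ 41 * k ^ 28) := by ring
      _ ≤ 2 ^ 9 * 2 ^ k := by gcongr
      _ = 2 ^ (k + 9) := by ring
      _ ≤ _ := hs
  · have hc : k.choose 2 * 2 = (m + 3) * (m + 2) := by
      rw [Nat.choose_two_right, hk]
      exact Nat.div_mul_cancel (Nat.even_mul_pred_self (m + 3)).two_dvd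
    have h4 : 16 * k ^ 4 ≤ 2 ^ k := by
      refine le_trans ?_ hbig
      have : k ^ 4 ≤ k ^ 28 := Nat.pow_le_pow_right (by omega) (by norm_num)
      omega
    refine lt_of_pow_lt_pow_left₀ 2 (Nat.zero_le _) ?_
    calc (4 * k ^ 2 * 2 ^ (k.choose 2)) ^ 2 = 16 * k ^ 4 * 2 ^ (k.choose 2 * 2) := by
          rw [pow_mul]; ring
      _ ≤ 2 ^ k * 2 ^ (k.choose 2 * 2) := by gcongr
      _ = 2 ^ (k + (m + 3) * (m + 2)) := by rw [hc, pow_add]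
      _ < 2 ^ ((k + 9) * (m + 1)) := by
          apply Nat.pow_lt_pow_right (by norm_num)
          subst hk; nlinarith
      _ = (2 ^ (k + 9)) ^ (m + 1) := by rw [pow_mul]
      _ ≤ (s ^ 2) ^ (m + 1) := by gcongr
      _ = _ := by rw [← pow_mul, ← pow_mul, mul_comm]
  · have h1 : m ^ 4 ≤ k ^ 28 := 
      (Nat.pow_le_pow_left (by omega : m ≤ k) 4).trans (Nat.pow_le_pow_right (by omega) (by norm_num))
    have h2 : 2 ^ k = 8 * 2 ^ m := by rw [hk]; ring
    have h3 : (9 * m ^ 2) ^ 2 = 81 * m ^ 4 := by ring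
    omega

end helpers

/-- For all large enough `k` and all `s` with `s ≥ 2^{(k+9)/2}`, with `ℱ` the
family of edge sets of transversals and `ℱ₂⁴` the family of clusters:
`T(ℱ) > 16·|X|·(T(ℱ₂⁴)^{1/4} + 1/4)`. -/
theorem advanced_weak_win_condition :
    ∃ K : ℕ, ∀ k : ℕ, K ≤ k → ∀ s : ℕ, (s : ℝ) ≥ (2 : ℝ) ^ (((k : ℝ) + 9) / 2) →
      ∑ᶠ F ∈ {F : Finset (Finset (Fin k × Fin s)) |
          ∃ S : Finset (Fin k × Fin s), IsTransversal S ∧ F = edgeSet S},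
          (2 : ℝ) ^ (-(F.card : ℝ))
        > 16 * ((board k s).card : ℝ) *
            ((∑ᶠ F ∈ {F : Finset (Finset (Fin k × Fin s)) | IsCluster F},
                (2 : ℝ) ^ (-(F.card : ℝ))) ^ ((1 : ℝ) / 4) + 1 / 4) := by

  have hev : ∀ᶠ k : ℕ in Filter.atTop, 2 ^ 41 * k ^ 28 ≤ 2 ^ k := by
    have h := (tendsto_pow_const_div_const_pow_of_one_lt 28 (r := 2) (by norm_num)).eventually
      (gt_mem_nhds (show (0 : ℝ) < 1 / 2 ^ 41 by positivity))
    filter_upwards [h] with k hk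
    rw [div_lt_div_iff₀ (by positivity) (by positivity)] at hk
    have : (2 : ℝ) ^ 41 * (k : ℝ) ^ 28 ≤ 2 ^ k := by linarith
    exact_mod_cast this
  obtain ⟨K, hK⟩ := Filter.eventually_atTop.1 hev
  refine ⟨max K 17, fun k hk s hs => ?_⟩
  have hbig := hK k (le_trans (le_max_left _ _) hk)
  have h17 : 17 ≤ k := le_trans (le_max_right _ _) hk
  obtain ⟨m, hkm⟩ : ∃ m, k = m + 3 := ⟨k - 3, by omega⟩
  have h14 : 14 ≤ m := by omega
  have hs2 : 2 ^ (k + 9) ≤ s ^ 2 := by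
    have h1 : ((2 : ℝ) ^ (((k : ℝ) + 9) / 2)) ^ 2 ≤ (s : ℝ) ^ 2 := by gcongr
    rw [← Real.rpow_natCast, ← Real.rpow_mul (by norm_num)] at h1
    have h2 : ((k : ℝ) + 9) / 2 * ((2 : ℕ) : ℝ) = ((k + 9 : ℕ) : ℝ) := by push_cast; ring
    rw [h2, Real.rpow_natCast] at h1
    exact_mod_cast h1
  obtain ⟨hA, hB, hm⟩ := aux_final k m s hkm h14 hbig hs2
  have hT1 := aux_T1 k s (by omega)
  have hT2 := aux_T2 k m s hkm h14 hm hs2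
  have hX := aux_board k s
  rw [hT1]
  set T := ∑ᶠ F ∈ {F : Finset (Finset (Fin k × Fin s)) | IsCluster F},
    (2 : ℝ) ^ (-(F.card : ℝ)) with hTdef
  have hT0 : 0 ≤ T := by
    apply finsum_nonneg; intro F; apply finsum_nonneg; intro _; positivity
  have hA' : (2 : ℝ) ^ 25 * (k : ℝ) ^ 14 ≤ s := by exact_mod_cast hA
  have hB' : 4 * (k : ℝ) ^ 2 * 2 ^ (k.choose 2) < (s : ℝ) ^ (m + 1) := by exact_mod_cast hB
  have hX' : 2 * ((board k s).card : ℝ) ≤ (k : ℝ) ^ 2 * (s : ℝ) ^ 2 := by exact_mod_cast hX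
  have hk0 : (0 : ℝ) < k := by exact_mod_cast (by omega : 0 < k)
  have hs0 : (0 : ℝ) < s := lt_of_lt_of_le (by positivity) hA'
  set W : ℝ := 2 ^ (k.choose 2) with hW
  have hW0 : 0 < W := by positivity
  set Z : ℝ := (s : ℝ) ^ (m + 1) with hZ
  have hZ0 : 0 < Z := by positivity
  have hy : T ^ ((1 : ℝ) / 4) ≤ Z / (W * (16 * (k : ℝ) ^ 2)) := by
    have h1 : T ≤ (Z / (W * (16 * (k : ℝ) ^ 2))) ^ 4 := by
      refine hT2.trans ?_
      rw [div_pow, div_le_div_iff₀ (by positivity) (by positivity)]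
      have e : (s : ℝ) ^ k * ((s : ℝ) ^ m) ^ 3 * s = Z ^ 4 := by
        rw [hZ, hkm]; ring
      calc 512 * (k : ℝ) ^ 6 * ((s : ℝ) ^ k * ((s : ℝ) ^ m) ^ 3) * (W * (16 * (k : ℝ) ^ 2)) ^ 4
          = ((s : ℝ) ^ k * ((s : ℝ) ^ m) ^ 3) * (2 ^ 25 * (k : ℝ) ^ 14) * W ^ 4 := by ring
        _ ≤ ((s : ℝ) ^ k * ((s : ℝ) ^ m) ^ 3) * s * W ^ 4 := by gcongr
        _ = _ := by rw [e]
    calc T ^ ((1 : ℝ) / 4) ≤ ((Z / (W * (16 * (k : ℝ) ^ 2))) ^ 4) ^ ((1 : ℝ) / 4) := by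
          gcongr
      _ = _ := by
          rw [← Real.rpow_natCast, ← Real.rpow_mul (by positivity)]; norm_num
  have hfin : 16 * ((board k s).card : ℝ) * (T ^ ((1 : ℝ) / 4) + 1 / 4) ≤
      8 * ((k : ℝ) ^ 2 * (s : ℝ) ^ 2) * (Z / (W * (16 * (k : ℝ) ^ 2)) + 1 / 4) := by
    have : 0 ≤ T ^ ((1 : ℝ) / 4) := by positivity
    apply mul_le_mul <;> first | linarith | positivity
  refine lt_of_le_of_lt hfin ?_
  have e1 : 8 * ((k : ℝ) ^ 2 * (s : ℝ) ^ 2) * (Z / (W * (16 * (k : ℝ) ^ 2)) + 1 / 4) =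
      (s : ℝ) ^ 2 * (Z + 4 * (k : ℝ) ^ 2 * W) / (2 * W) := by
    field_simp
    ring
  have e2 : (s : ℝ) ^ k / W = (s : ℝ) ^ 2 * (Z + Z) / (2 * W) := by
    rw [hZ, hkm]; field_simp; ring
  rw [e1, e2]
  gcongr
end
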